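/- arXiv:2308.09842 — 2 statements merged into one kernel-verified Lean document; each statement's English description precedes it below -/
import Mathlib

section
/- Let ε > 0 be a real number, k ≥ 3 an integer, d ≥ 1, and γ a real number with γ > k·ε. Let r₁, …, r_m be pairwise disjoint γ-bounded rectilinear hyperrectangles in ℝ^d (each r_j = ∏_{i=1}^d [a_{j,i}, b_{j,i}] with b_{j,i} − a_{j,i} ≥ γ for all i). Then there exist rectilinear hyperrectangles r₁^(ε), …, r_m^(ε) such that each r_j^(ε) is ε-aligned, r_j^(ε) ⊆ r_j for every j (so the r_j^(ε) are pairwise disjoint), and the Lebesgue volume of ⋃_j r_j^(ε) is at least ((k−2)/k)^d times the Lebesgue volume of ⋃_j r_j. -/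
open MeasureTheory

/-- Proposition 2: a pairwise disjoint family of γ-bounded rectilinear hyperrectangles
(γ > k·ε) admits ε-aligned rectilinear sub-hyperrectangles whose union covers at least a
((k-2)/k)^d fraction of the volume of the original union. -/
theorem epsilon_aligned_family
    (ε : ℝ) (hε : 0 < ε) (k : ℕ) (hk : 3 ≤ k) (d : ℕ) (hd : 1 ≤ d)
    (γ : ℝ) (hγ : γ > (k : ℝ) * ε) (m : ℕ)
    (a b : Fin m → Fin d → ℝ)
    (hab : ∀ j i, a j i ≤ b j i) (hbound : ∀ j i, γ ≤ b j i - a j i)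
    (hdisj : Pairwise (Function.onFun Disjoint
      fun j => Set.univ.pi fun i => Set.Icc (a j i) (b j i))) :
    ∃ ℓ u : Fin m → Fin d → ℝ,
      (∀ j i, ℓ j i ≤ u j i) ∧
      (∀ j i, ∃ c : ℤ, ℓ j i = (c : ℝ) * ε) ∧
      (∀ j i, ∃ c : ℤ, u j i = (c : ℝ) * ε) ∧
      (∀ j, (Set.univ.pi fun i => Set.Icc (ℓ j i) (u j i)) ⊆
        Set.univ.pi fun i => Set.Icc (a j i) (b j i)) ∧
      ENNReal.ofReal ((((k : ℝ) - 2) / k) ^ d) *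
          volume (⋃ j, Set.univ.pi fun i => Set.Icc (a j i) (b j i)) ≤
        volume (⋃ j, Set.univ.pi fun i => Set.Icc (ℓ j i) (u j i)) := by
  have hk' : (3 : ℝ) ≤ k := by exact_mod_cast hk
  have hk0 : (0 : ℝ) < k := by linarith
  have hl1 : ∀ j i, a j i ≤ (⌈a j i / ε⌉ : ℝ) * ε := fun j i =>
    (div_le_iff₀ hε).1 (Int.le_ceil _)
  have hl2 : ∀ j i, (⌈a j i / ε⌉ : ℝ) * ε ≤ a j i + ε := fun j i => by
    have h := (Int.ceil_lt_add_one (a j i / ε)).le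
    have h2 := mul_le_mul_of_nonneg_right h hε.le
    rwa [add_mul, div_mul_cancel₀ _ hε.ne', one_mul] at h2
  have hu1 : ∀ j i, (⌊b j i / ε⌋ : ℝ) * ε ≤ b j i := fun j i =>
    (le_div_iff₀ hε).1 (Int.floor_le _)
  have hu2 : ∀ j i, b j i ≤ (⌊b j i / ε⌋ : ℝ) * ε + ε := fun j i => by
    have h := (Int.lt_floor_add_one (b j i / ε)).le
    have h2 := mul_le_mul_of_nonneg_right h hε.le
    rwa [add_mul, div_mul_cancel₀ _ hε.ne', one_mul] at h2
  have hlen : ∀ j i, ((k : ℝ) - 2) / k * (b j i - a j i) ≤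
      (⌊b j i / ε⌋ : ℝ) * ε - (⌈a j i / ε⌉ : ℝ) * ε := fun j i => by
    have h1 := hl2 j i
    have h2 := hu2 j i
    have h3 := hbound j i
    have h4 : ε ≤ (b j i - a j i) / k := by
      rw [le_div_iff₀ hk0]
      linarith
    have h5 : ((k : ℝ) - 2) / k * (b j i - a j i) =
        (b j i - a j i) - 2 * ((b j i - a j i) / k) := by
      field_simp
    linarith
  have hc : 0 ≤ ((k : ℝ) - 2) / k := div_nonneg (by linarith) hk0.le
  have hsub : ∀ j, (Set.univ.pi fun i =>
      Set.Icc ((⌈a j i / ε⌉ : ℝ) * ε) ((⌊b j i / ε⌋ : ℝ) * ε)) ⊆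
        Set.univ.pi fun i => Set.Icc (a j i) (b j i) := fun j =>
    Set.pi_mono fun i _ => Set.Icc_subset_Icc (hl1 j i) (hu1 j i)
  refine ⟨fun j i => (⌈a j i / ε⌉ : ℝ) * ε, fun j i => (⌊b j i / ε⌋ : ℝ) * ε,
    fun j i => ?_, fun j i => ⟨_, rfl⟩, fun j i => ⟨_, rfl⟩, hsub, ?_⟩
  · have h1 := hlen j i
    have h2 := mul_nonneg hc (sub_nonneg.2 (hab j i))
    show (⌈a j i / ε⌉ : ℝ) * ε ≤ (⌊b j i / ε⌋ : ℝ) * ε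
    linarith
  · have hmeas : ∀ (x y : Fin d → ℝ),
        MeasurableSet (Set.univ.pi fun i => Set.Icc (x i) (y i)) := fun x y =>
      MeasurableSet.univ_pi fun i => measurableSet_Icc
    rw [measure_iUnion hdisj (fun j => hmeas _ _),
      measure_iUnion (fun p q hpq => (hdisj hpq).mono (hsub p) (hsub q))
        (fun j => hmeas _ _), ← ENNReal.tsum_mul_left]
    refine ENNReal.tsum_le_tsum fun j => ?_
    simp only [volume_pi_pi, Real.volume_Icc]
    have hp : ENNReal.ofReal ((((k : ℝ) - 2) / k) ^ d) =
        ∏ _i : Fin d, ENNReal.ofReal (((k : ℝ) - 2) / k) := by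
      simp [ENNReal.ofReal_pow hc]
    rw [hp, ← Finset.prod_mul_distrib]
    refine Finset.prod_le_prod' fun i _ => ?_
    rw [← ENNReal.ofReal_mul hc]
    exact ENNReal.ofReal_le_ofReal (hlen j i)
end

section
/- Let ε > 0 be a real number, k ≥ 3 an integer, d ≥ 1, and γ a real number with γ > k·ε. Let r₁, …, r_m be pairwise disjoint γ-bounded rectilinear hyperrectangles in ℝ^d, and let S = ⋃_j r_j. Then there exists a finite family of pairwise disjoint half-open cubes of the form ∏_{i=1}^d [ε·cᵢ, ε·(cᵢ+1)) with all cᵢ integers, each contained in S, whose total Lebesgue volume is at least ((k−2)/k)^d times the Lebesgue volume of S. -/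
open MeasureTheory

/-- A pairwise disjoint family of γ-bounded rectilinear hyperrectangles (γ > k·ε) with
union S contains a finite pairwise disjoint family of half-open ε-grid cubes whose total
volume is at least ((k-2)/k)^d times the volume of S. -/
theorem epsilon_grid_cubes_in_union
    (ε : ℝ) (hε : 0 < ε) (k : ℕ) (hk : 3 ≤ k) (d : ℕ) (hd : 1 ≤ d)
    (γ : ℝ) (hγ : γ > (k : ℝ) * ε) (m : ℕ)
    (a b : Fin m → Fin d → ℝ)
    (hab : ∀ j i, a j i ≤ b j i) (hbound : ∀ j i, γ ≤ b j i - a j i)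
    (hdisj : Pairwise (Function.onFun Disjoint
      fun j => Set.univ.pi fun i => Set.Icc (a j i) (b j i)))
    (S : Set (Fin d → ℝ))
    (hS : S = ⋃ j, Set.univ.pi fun i => Set.Icc (a j i) (b j i)) :
    ∃ C : Finset (Fin d → ℤ),
      ((C : Set (Fin d → ℤ)).PairwiseDisjoint
        fun c => Set.univ.pi fun i => Set.Ico (ε * c i) (ε * ((c i : ℝ) + 1))) ∧
      (∀ c ∈ C, (Set.univ.pi fun i => Set.Ico (ε * c i) (ε * ((c i : ℝ) + 1))) ⊆ S) ∧
      ENNReal.ofReal ((((k : ℝ) - 2) / k) ^ d) * volume S ≤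
        volume (⋃ c ∈ C, Set.univ.pi fun i => Set.Ico (ε * c i) (ε * ((c i : ℝ) + 1))) := by
  classical
  have hk' : (3 : ℝ) ≤ k := by exact_mod_cast hk
  have hkpos : (0 : ℝ) < k := by linarith
  have hr0 : 0 ≤ ((k : ℝ) - 2) / k := div_nonneg (by linarith) hkpos.le
  let p : Fin m → Fin d → ℤ := fun j i => ⌈a j i / ε⌉
  let q : Fin m → Fin d → ℤ := fun j i => ⌊b j i / ε⌋
  have hp1 : ∀ j i, a j i ≤ ε * (p j i : ℝ) := fun j i => by
    have := (div_le_iff₀ hε).1 (Int.le_ceil (a j i / ε))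
    linarith
  have hp2 : ∀ j i, ε * (p j i : ℝ) ≤ a j i + ε := fun j i => by
    have h1 := (Int.ceil_lt_add_one (a j i / ε)).le
    have h2 := mul_le_mul_of_nonneg_left h1 hε.le
    have h3 : ε * (a j i / ε + 1) = a j i + ε := by field_simp
    linarith
  have hq1 : ∀ j i, ε * (q j i : ℝ) ≤ b j i := fun j i => by
    have := (le_div_iff₀ hε).1 (Int.floor_le (b j i / ε))
    linarith
  have hq2 : ∀ j i, b j i - ε ≤ ε * (q j i : ℝ) := fun j i => by
    have h1 := (Int.sub_one_lt_floor (b j i / ε)).le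
    have h2 := mul_le_mul_of_nonneg_left h1 hε.le
    have h3 : ε * (b j i / ε - 1) = b j i - ε := by field_simp
    linarith
  let R : Fin m → Set (Fin d → ℝ) := fun j => Set.univ.pi fun i => Set.Icc (a j i) (b j i)
  let B : Fin m → Set (Fin d → ℝ) := fun j =>
    Set.univ.pi fun i => Set.Ico (ε * (p j i : ℝ)) (ε * (q j i : ℝ))
  have hBR : ∀ j, B j ⊆ R j := fun j x hx i hi =>
    ⟨(hp1 j i).trans (hx i hi).1, (hx i hi).2.le.trans (hq1 j i)⟩
  have hvol : ∀ j, ENNReal.ofReal ((((k : ℝ) - 2) / k) ^ d) * volume (R j) ≤ volume (B j) := by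
    intro j
    have e1 : volume (R j) = ∏ i, ENNReal.ofReal (b j i - a j i) := by
      simp only [R, volume_pi_pi, Real.volume_Icc]
    have e2 : volume (B j) = ∏ i, ENNReal.ofReal (ε * (q j i : ℝ) - ε * (p j i : ℝ)) := by
      simp only [B, volume_pi_pi, Real.volume_Ico]
    have e3 : ENNReal.ofReal ((((k : ℝ) - 2) / k) ^ d)
        = ∏ _i : Fin d, ENNReal.ofReal (((k : ℝ) - 2) / k) := by
      rw [ENNReal.ofReal_pow hr0]; simp
    rw [e1, e2, e3, ← Finset.prod_mul_distrib]
    refine Finset.prod_le_prod' fun i _ => ?_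
    rw [← ENNReal.ofReal_mul hr0]
    apply ENNReal.ofReal_le_ofReal
    have h1 := hp2 j i
    have h2 := hq2 j i
    have h3 := hbound j i
    have h4 : ((k : ℝ) - 2) / k * (b j i - a j i) ≤ (b j i - a j i) - 2 * ε := by
      rw [div_mul_eq_mul_div, div_le_iff₀ hkpos]
      nlinarith
    linarith
  refine ⟨Finset.univ.biUnion fun j => Fintype.piFinset fun i => Finset.Ico (p j i) (q j i),
    ?_, ?_, ?_⟩
  · intro c _ c' _ hne
    refine Set.disjoint_left.2 fun x hx hx' => hne (funext fun i => ?_)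
    have h1 := hx i trivial
    have h2 := hx' i trivial
    have h3 : (c i : ℝ) < c' i + 1 := lt_of_mul_lt_mul_left (h1.1.trans_lt h2.2) hε.le
    have h4 : (c' i : ℝ) < c i + 1 := lt_of_mul_lt_mul_left (h2.1.trans_lt h1.2) hε.le
    have h5 : c i < c' i + 1 := by exact_mod_cast h3
    have h6 : c' i < c i + 1 := by exact_mod_cast h4
    omega
  · intro c hc x hx
    simp only [Finset.mem_biUnion, Finset.mem_univ, true_and, Fintype.mem_piFinset,
      Finset.mem_Ico] at hc
    obtain ⟨j, hj⟩ := hc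
    rw [hS]
    refine Set.mem_iUnion.2 ⟨j, hBR j fun i hi => ⟨?_, ?_⟩⟩
    · refine le_trans ?_ (hx i hi).1
      have : (p j i : ℝ) ≤ c i := by exact_mod_cast (hj i).1
      exact mul_le_mul_of_nonneg_left this hε.le
    · refine (hx i hi).2.trans_le ?_
      have : (c i : ℝ) + 1 ≤ q j i := by exact_mod_cast (hj i).2
      exact mul_le_mul_of_nonneg_left this hε.le
  · have hBd : Pairwise (Function.onFun Disjoint B) := fun j j' h =>
      (hdisj h).mono (hBR j) (hBR j')
    have hBm : ∀ j, MeasurableSet (B j) := fun j =>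
      MeasurableSet.univ_pi fun i => measurableSet_Ico
    calc ENNReal.ofReal ((((k : ℝ) - 2) / k) ^ d) * volume S
        ≤ ENNReal.ofReal ((((k : ℝ) - 2) / k) ^ d) * ∑' j, volume (R j) := by
          gcongr
          rw [hS]
          exact measure_iUnion_le R
      _ = ∑' j, ENNReal.ofReal ((((k : ℝ) - 2) / k) ^ d) * volume (R j) :=
          ENNReal.tsum_mul_left.symm
      _ ≤ ∑' j, volume (B j) := ENNReal.tsum_le_tsum hvol
      _ = volume (⋃ j, B j) := (measure_iUnion hBd hBm).symm
      _ ≤ _ := by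
          apply measure_mono
          intro x hx
          obtain ⟨j, hj⟩ := Set.mem_iUnion.1 hx
          have hl : ∀ i, ε * ((⌊x i / ε⌋ : ℤ) : ℝ) ≤ x i := fun i => by
            have := (le_div_iff₀ hε).1 (Int.floor_le (x i / ε))
            linarith
          have hu : ∀ i, x i < ε * (((⌊x i / ε⌋ : ℤ) : ℝ) + 1) := fun i => by
            have := (div_lt_iff₀ hε).1 (Int.lt_floor_add_one (x i / ε))
            linarith
          refine Set.mem_iUnion₂.2 ⟨fun i => ⌊x i / ε⌋, ?_, fun i _ => ⟨hl i, hu i⟩⟩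
          simp only [Finset.mem_biUnion, Finset.mem_univ, true_and, Fintype.mem_piFinset,
            Finset.mem_Ico]
          refine ⟨j, fun i => ⟨?_, ?_⟩⟩
          · rw [Int.le_floor, le_div_iff₀ hε]
            have := (hj i trivial).1
            linarith
          · rw [Int.floor_lt, div_lt_iff₀ hε]
            have := (hj i trivial).2
            linarith
end
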